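/- Let κ, θ, σ > 0, set ν := 2κθ/σ², let G(x) := ∫ₓ^∞ π_{ν,θ}(y)/y dy, and define Φ(ε) := κ·∫₀^ε π_{ν,θ}(x) dx + (σ²/2)·π_{ν,θ}(ε)²/G(ε) + (σ²/2)·π_{ν,θ}(ε)·(ν − 1 − νε/θ) for ε > 0. If 0 < ν < 1, then Φ(ε) tends to κ·(1 − ν) as ε tends to 0 from the right. (This is the statement that for ν < 1 the capacity of the origin equals κ(1 − ν) > 0, so the univariate CIR process hits the origin.) -/

import Mathlib

open Real MeasureTheory Set Filter

/-- Gamma density with shape `ν` and rate `ν/θ`. -/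
noncomputable def piDens (ν θ x : ℝ) : ℝ :=
  ((ν / θ) ^ ν / Real.Gamma ν) * x ^ (ν - 1) * Real.exp (-ν * x / θ)

/-- The function `G(x) = ∫ₓ^∞ π_{ν,θ}(y)/y dy`. -/
noncomputable def Gfun (ν θ x : ℝ) : ℝ :=
  ∫ y in Set.Ioi x, piDens ν θ y / y

lemma piDens_integrable {ν θ : ℝ} (hθ : 0 < θ) (h0 : 0 < ν) :
    IntegrableOn (piDens ν θ) (Ioi 0) := by
  have h := integrableOn_rpow_mul_exp_neg_mul_rpow (s := ν - 1) (p := 1) (b := ν / θ)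
    (by linarith) one_pos (by positivity)
  have h2 := h.const_mul ((ν / θ) ^ ν / Real.Gamma ν)
  refine h2.congr ?_
  filter_upwards with x
  simp only [piDens, rpow_one]
  rw [show -ν * x / θ = -(ν / θ) * x by ring]
  ring

lemma piDens_integral {ν θ : ℝ} (hθ : 0 < θ) (h0 : 0 < ν) :
    ∫ x in Ioi (0:ℝ), piDens ν θ x = 1 := by
  have h := Real.integral_rpow_mul_exp_neg_mul_Ioi (a := ν) (r := ν / θ) h0 (by positivity)
  have hl : 0 < ν / θ := by positivity
  have e : ∀ x, piDens ν θ x =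
      ((ν / θ) ^ ν / Real.Gamma ν) * (x ^ (ν - 1) * Real.exp (-(ν / θ * x))) := by
    intro x
    simp only [piDens]
    rw [show -ν * x / θ = -(ν / θ * x) by ring]
    ring
  simp_rw [e]
  rw [integral_const_mul, h, one_div, inv_rpow hl.le]
  have := Real.Gamma_pos_of_pos h0
  have := rpow_pos_of_pos hl ν
  field_simp

lemma piDens_pos {ν θ x : ℝ} (hθ : 0 < θ) (h0 : 0 < ν) (hx : 0 < x) : 0 < piDens ν θ x := by
  have := Real.Gamma_pos_of_pos h0
  unfold piDens
  positivity

lemma piDens_hasDeriv {ν θ x : ℝ} (hx : 0 < x) :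
    HasDerivAt (piDens ν θ) ((ν - 1) * (piDens ν θ x / x) - ν / θ * piDens ν θ x) x := by
  have h1 : HasDerivAt (fun x : ℝ => x ^ (ν - 1)) ((ν - 1) * x ^ (ν - 1 - 1)) x :=
    Real.hasDerivAt_rpow_const (Or.inl hx.ne')
  have h2 : HasDerivAt (fun x : ℝ => Real.exp (-ν * x / θ))
      (Real.exp (-ν * x / θ) * (-ν * 1 / θ)) x :=
    (((hasDerivAt_id x).const_mul (-ν)).div_const θ).exp
  have h3 := (h1.const_mul ((ν / θ) ^ ν / Real.Gamma ν)).mul h2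
  refine h3.congr_deriv ?_
  simp only [piDens]
  rw [rpow_sub_one hx.ne' (ν - 1)]
  ring

lemma piDens_tendsto_atTop {ν θ : ℝ} (hθ : 0 < θ) (h0 : 0 < ν) :
    Tendsto (piDens ν θ) atTop (nhds 0) := by
  have h := (tendsto_rpow_mul_exp_neg_mul_atTop_nhds_zero (ν - 1) (ν / θ)
    (by positivity)).const_mul ((ν / θ) ^ ν / Real.Gamma ν)
  rw [mul_zero] at h
  refine h.congr fun x => ?_
  simp only [piDens]
  rw [show -ν * x / θ = -(ν / θ) * x by ring]
  ring

lemma piDens_div_integrable {ν θ ε : ℝ} (hθ : 0 < θ) (h0 : 0 < ν) (hε : 0 < ε) :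
    IntegrableOn (fun y => piDens ν θ y / y) (Ioi ε) := by
  have hi : IntegrableOn (piDens ν θ) (Ioi ε) :=
    (piDens_integrable hθ h0).mono_set (Ioi_subset_Ioi hε.le)
  refine Integrable.mono' (hi.const_mul (1 / ε)) ?_ ?_
  · exact (hi.aestronglyMeasurable.aemeasurable.div aemeasurable_id).aestronglyMeasurable
  · filter_upwards [ae_restrict_mem measurableSet_Ioi] with y hy
    have hy' : ε < y := hy
    have hy0 : 0 < y := hε.trans hy'
    have hp := piDens_pos hθ h0 hy0
    rw [Real.norm_of_nonneg (by positivity), div_eq_mul_one_div, mul_comm]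
    gcongr

lemma Gfun_eq {ν θ ε : ℝ} (hθ : 0 < θ) (h0 : 0 < ν) (hε : 0 < ε) :
    (1 - ν) * Gfun ν θ ε = piDens ν θ ε - ν / θ * (1 - ∫ x in (0:ℝ)..ε, piDens ν θ x) := by
  have hI := piDens_integrable hθ h0
  have hi : IntegrableOn (piDens ν θ) (Ioi ε) := hI.mono_set (Ioi_subset_Ioi hε.le)
  have hg := piDens_div_integrable hθ h0 hε
  have key := integral_Ioi_of_hasDerivAt_of_tendsto
    (piDens_hasDeriv (ν := ν) (θ := θ) hε).continuousAt.continuousWithinAt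
    (fun x hx => piDens_hasDeriv (hε.trans hx))
    ((hg.const_mul (ν - 1)).sub (hi.const_mul (ν / θ))) (piDens_tendsto_atTop hθ h0)
  rw [integral_sub (hg.const_mul (ν - 1)) (hi.const_mul (ν / θ)), integral_const_mul,
    integral_const_mul] at key
  have h1 := intervalIntegral.integral_Ioi_sub_Ioi hI hε.le
  rw [piDens_integral hθ h0] at h1
  rw [← h1]
  unfold Gfun
  linarith

theorem cir_capacity_origin_positive
    (κ θ σ ν : ℝ) (hκ : 0 < κ) (hθ : 0 < θ) (hσ : 0 < σ)
    (hν : ν = 2 * κ * θ / σ ^ 2) (hν0 : 0 < ν) (hν1 : ν < 1)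
    (Φ : ℝ → ℝ)
    (hΦ : ∀ ε > (0:ℝ),
      Φ ε = κ * (∫ x in (0:ℝ)..ε, piDens ν θ x)
        + σ ^ 2 / 2 * (piDens ν θ ε) ^ 2 / Gfun ν θ ε
        + σ ^ 2 / 2 * piDens ν θ ε * (ν - 1 - ν * ε / θ)) :
    Filter.Tendsto Φ (nhdsWithin 0 (Set.Ioi 0)) (nhds (κ * (1 - ν))) := by
  have hG := Real.Gamma_pos_of_pos hν0
  have hk : σ ^ 2 / 2 * (ν / θ) = κ := by
    rw [hν]; field_simp
  have hexp : Tendsto (fun x : ℝ => Real.exp (-ν * x / θ)) (nhdsWithin 0 (Ioi 0)) (nhds 1) := by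
    have : Continuous (fun x : ℝ => Real.exp (-ν * x / θ)) := by fun_prop
    have h := (this.tendsto 0).mono_left (nhdsWithin_le_nhds (s := Ioi 0))
    simpa using h
  have hC : 0 < (ν / θ) ^ ν / Real.Gamma ν := by positivity
  -- the density blows up at the origin
  have hpi : Tendsto (piDens ν θ) (nhdsWithin 0 (Ioi 0)) atTop := by
    have h := tendsto_rpow_neg_nhdsGT_zero (y := ν - 1) (by linarith)
    exact (h.const_mul_atTop hC).atTop_mul_pos one_pos hexp
  -- `ε π(ε) → 0`
  have heps : Tendsto (fun x => piDens ν θ x * x) (nhdsWithin 0 (Ioi 0)) (nhds 0) := by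
    have h1 : Tendsto (fun x : ℝ => x ^ ν) (nhdsWithin 0 (Ioi 0)) (nhds 0) := by
      have h := ((Real.continuous_rpow_const hν0.le).tendsto 0).mono_left
        (nhdsWithin_le_nhds (s := Ioi 0))
      simpa [Real.zero_rpow hν0.ne'] using h
    have h2 := (h1.const_mul ((ν / θ) ^ ν / Real.Gamma ν)).mul hexp
    rw [mul_zero, zero_mul] at h2
    refine h2.congr' ?_
    filter_upwards [self_mem_nhdsWithin] with x hx
    have hx0 : (0:ℝ) < x := hx
    simp only [piDens]
    rw [rpow_sub_one hx0.ne']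
    field_simp
  have hF : Tendsto (fun ε => ∫ x in (0:ℝ)..ε, piDens ν θ x) (nhdsWithin 0 (Ioi 0)) (nhds 0) := by
    have hii : IntervalIntegrable (piDens ν θ) volume 0 1 := by
      rw [intervalIntegrable_iff_integrableOn_Ioc_of_le zero_le_one]
      exact (piDens_integrable hθ hν0).mono_set Ioc_subset_Ioi_self
    have hc := intervalIntegral.continuousOn_primitive_interval' hii (left_mem_uIcc)
    have h := hc 0 left_mem_uIcc
    rw [ContinuousWithinAt, intervalIntegral.integral_same, uIcc_of_le zero_le_one] at h
    refine h.mono_left ?_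
    rw [← nhdsWithin_Ioc_eq_nhdsGT (zero_lt_one' ℝ)]
    exact nhdsWithin_mono _ Ioc_subset_Icc_self
  set F : ℝ → ℝ := fun ε => ∫ x in (0:ℝ)..ε, piDens ν θ x with hFdef
  have hP : Tendsto (fun ε => 1 - F ε) (nhdsWithin 0 (Ioi 0)) (nhds 1) := by
    simpa using hF.const_sub 1
  have hq : Tendsto (fun ε => ν / θ * (1 - F ε) / piDens ν θ ε) (nhdsWithin 0 (Ioi 0))
      (nhds 0) := (hP.const_mul (ν / θ)).div_atTop hpi
  have hmain : Tendsto (fun ε => κ * F ε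
      + κ * (1 - ν) * (1 - F ε) * (1 - ν / θ * (1 - F ε) / piDens ν θ ε)⁻¹
      - κ * (piDens ν θ ε * ε)) (nhdsWithin 0 (Ioi 0)) (nhds (κ * (1 - ν))) := by
    have hq' := (hq.const_sub 1).inv₀ (by norm_num)
    have := ((hF.const_mul κ).add ((hP.const_mul (κ * (1 - ν))).mul hq')).sub
      (heps.const_mul κ)
    simpa using this
  refine hmain.congr' ?_
  have hlt : ∀ᶠ ε in nhdsWithin (0:ℝ) (Ioi 0), ν / θ * (1 - F ε) / piDens ν θ ε < 1 :=
    hq.eventually_lt_const one_pos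
  filter_upwards [self_mem_nhdsWithin, hlt] with ε hε hl
  have hε0 : (0:ℝ) < ε := hε
  rw [hΦ ε hε0]
  have hGe := Gfun_eq hθ hν0 hε0
  change (1 - ν) * Gfun ν θ ε = piDens ν θ ε - ν / θ * (1 - F ε) at hGe
  change _ = κ * F ε + _ + _
  have hp := piDens_pos hθ hν0 hε0
  rw [div_lt_one hp] at hl
  have h1ν : 0 < 1 - ν := by linarith
  have hgpos : 0 < Gfun ν θ ε := by
    by_contra hcon
    nlinarith
  have hinv : (1 - ν / θ * (1 - F ε) / piDens ν θ ε)⁻¹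
      = piDens ν θ ε / ((1 - ν) * Gfun ν θ ε) := by
    rw [hGe, one_sub_div hp.ne', inv_div]
  rw [hinv, ← hk]
  have e2 : ν / θ * (1 - F ε) = piDens ν θ ε - (1 - ν) * Gfun ν θ ε := by linarith
  have e3 : σ ^ 2 / 2 * (ν / θ) * (1 - ν) * (1 - F ε) * (piDens ν θ ε / ((1 - ν) * Gfun ν θ ε))
      = σ ^ 2 / 2 * (ν / θ * (1 - F ε)) * (piDens ν θ ε / Gfun ν θ ε) := by
    field_simp
  rw [e3, e2]
  field_simp
  ring
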